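/- arXiv:2302.04695 — 2 statements merged into one kernel-verified Lean document; each statement's English description precedes it below -/
import Mathlib

section
/- Let K_{n_1,...,n_k} be a complete k-partite graph. If there exist indices i and j with n_i - n_j ≥ 2, then moving one vertex from part i to part j strictly increases the spectral radius: λ(K_{n_1,...,n_i - 1,...,n_j + 1,...,n_k}) > λ(K_{n_1,...,n_i,...,n_j,...,n_k}). -/
open Finset

noncomputable def adjMat {V : Type*} [Fintype V] [DecidableEq V] (G : SimpleGraph V) :
    Matrix V V ℝ :=
  letI := Classical.decRel G.Adj
  G.adjMatrix ℝ

/-- The spectral radius (largest adjacency eigenvalue) of a finite graph. -/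
noncomputable def specRad {V : Type*} [Fintype V] [DecidableEq V] (G : SimpleGraph V) : ℝ :=
  sSup (spectrum ℝ (adjMat G))

/-- `G` contains no matching with `m` edges. -/
def MFree {V : Type*} (G : SimpleGraph V) (m : ℕ) : Prop :=
  ¬ ∃ M : SimpleGraph.Subgraph G, M.IsMatching ∧ M.edgeSet.ncard = m

/-!
On an eigenvector `v` of a complete multipartite graph for an eigenvalue `μ > 0`, the eigenvalue
equation says that `μ * v x` is the total sum of `v` minus its sum over the part of `x`. Summing
over the parts shows that the positive eigenvalues are the positive solutions of
`∑ t, n t / (μ + n t) = 1`, where the `n t` are the part sizes. Since `x ↦ x / (μ + x)` is strictly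
concave, balancing two parts raises the left-hand side, so at the old spectral radius it now
exceeds `1`. It tends to `0` as `μ → ∞`, hence it takes the value `1` at some larger `μ`.
-/

open Filter Topology SimpleGraph Matrix

section Secular

variable {ι : Type*} [Fintype ι] {w w' : ι → ℝ} {μ : ℝ}

/-- The secular function of the weights `w`. When `w` lists the part sizes of a complete
multipartite graph, the positive eigenvalues are the positive solutions of `secular w μ = 1`.
A term with `w t = 0` vanishes for every `μ`, including `μ = 0`, where it reads `0 / 0`. -/
noncomputable def secular (w : ι → ℝ) (μ : ℝ) : ℝ :=
  ∑ t, w t / (μ + w t)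

lemma continuousOn_secular (hw : ∀ t, 0 ≤ w t) : ContinuousOn (secular w) (Set.Ici 0) := by
  refine continuousOn_finsetSum _ fun t _ ↦ ?_
  rcases (hw t).eq_or_lt with hzero | hpos
  · simpa only [← hzero, zero_div] using continuousOn_const
  · exact continuousOn_const.div (by fun_prop) fun μ hμ ↦ (add_pos_of_nonneg_of_pos hμ hpos).ne'

lemma tendsto_secular_atTop (w : ι → ℝ) : Tendsto (secular w) atTop (𝓝 0) := by
  have hterm (t : ι) : Tendsto (fun μ ↦ w t / (μ + w t)) atTop (𝓝 0) :=
    (tendsto_atTop_add_const_right _ _ tendsto_id).const_div_atTop _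
  unfold secular
  simpa only [sum_const_zero] using tendsto_finsetSum univ fun t _ ↦ hterm t

lemma exists_gt_secular_eq_one (hw : ∀ t, 0 ≤ w t) (hμ : 0 ≤ μ) (h : 1 < secular w μ) :
    ∃ ν, μ < ν ∧ secular w ν = 1 := by
  obtain ⟨M, hM, hμM⟩ := (((tendsto_secular_atTop w).eventually_lt_const one_pos).and
    (eventually_ge_atTop μ)).exists
  have hcont : ContinuousOn (secular w) (Set.Icc μ M) :=
    (continuousOn_secular hw).mono fun _ hx ↦ hμ.trans hx.1
  obtain ⟨ν, hν, hν_one⟩ := intermediate_value_Ioo' hμM hcont ⟨hM, h⟩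
  exact ⟨ν, hν.1, hν_one⟩

lemma one_lt_secular_zero (hw : ∀ t, 0 ≤ w t) {i j : ι} (hij : i ≠ j) (hi : 0 < w i)
    (hj : 0 < w j) : 1 < secular w 0 := by
  classical
  calc (1 : ℝ) < w i / (0 + w i) + w j / (0 + w j) := by
        rw [zero_add, zero_add, div_self hi.ne', div_self hj.ne']
        norm_num
    _ = ∑ t ∈ {i, j}, w t / (0 + w t) := by rw [sum_pair hij]
    _ ≤ secular w 0 := sum_le_univ_sum_of_nonneg fun t ↦
        div_nonneg (hw t) (add_nonneg le_rfl (hw t))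

lemma div_add_add_div_add_lt_of_balance {a b a' b' : ℝ} (hμ : 0 < μ) (hb : 0 ≤ b)
    (hsum : a' + b' = a + b) (ha' : a' < a) (hb' : b' < a) :
    a / (μ + a) + b / (μ + b) < a' / (μ + a') + b' / (μ + b') := by
  have hadd {x y : ℝ} (hx : 0 ≤ x) (hy : 0 ≤ y) :
      x / (μ + x) + y / (μ + y) = 2 - μ * (2 * μ + (x + y)) / ((μ + x) * (μ + y)) := by
    field_simp
    ring
  have hprod : (μ + a) * (μ + b) < (μ + a') * (μ + b') := by
    obtain rfl : b = a' + b' - a := by linarith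
    nlinarith [mul_pos (sub_pos.2 ha') (sub_pos.2 hb')]
  rw [hadd (by linarith) hb, hadd (by linarith) (by linarith), hsum]
  have ha : 0 < a := by linarith
  gcongr

lemma secular_lt_secular_of_balance {i j : ι} (hμ : 0 < μ) (hj : 0 ≤ w j)
    (hsum : w' i + w' j = w i + w j) (hi' : w' i < w i) (hj' : w' j < w i)
    (hrest : ∀ t, t ≠ i → t ≠ j → w' t = w t) : secular w μ < secular w' μ := by
  have hij : i ≠ j := by
    rintro rfl
    linarith
  have hdiff : secular w' μ - secular w μ =
      (w' i / (μ + w' i) - w i / (μ + w i)) + (w' j / (μ + w' j) - w j / (μ + w j)) := by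
    rw [secular, secular, ← sum_sub_distrib]
    refine Fintype.sum_eq_add i j hij fun t ht ↦ ?_
    rw [hrest t ht.1 ht.2, sub_self]
  linarith [div_add_add_div_add_lt_of_balance hμ hj hsum hi' hj']

end Secular

section Spectrum

variable {V : Type*} [Fintype V] [DecidableEq V] {G : SimpleGraph V} {μ : ℝ}

lemma mem_spectrum_iff_exists_mulVec_eq_smul {K : Type*} [Field K] {A : Matrix V V K} {μ : K} :
    μ ∈ spectrum K A ↔ ∃ v, v ≠ 0 ∧ A *ᵥ v = μ • v := by
  simp only [← spectrum_toLin', ← Module.End.hasEigenvalue_iff_mem_spectrum,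
    Module.End.hasEigenvalue_iff, Submodule.ne_bot_iff, Module.End.mem_eigenspace_iff,
    toLin'_apply, and_comm]

lemma le_specRad (h : μ ∈ spectrum ℝ (adjMat G)) : μ ≤ specRad G :=
  le_csSup (adjMat G).finite_spectrum.bddAbove h

lemma specRad_mem_spectrum_of_pos (h : 0 < specRad G) : specRad G ∈ spectrum ℝ (adjMat G) := by
  have hne : (spectrum ℝ (adjMat G)).Nonempty := by
    by_contra hempty
    rw [specRad, Set.not_nonempty_iff_eq_empty.1 hempty, Real.sSup_empty] at h
    exact h.false
  exact hne.csSup_mem (adjMat G).finite_spectrum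

end Spectrum

section CompleteMultipartite

variable {ι : Type*} [Fintype ι] [DecidableEq ι]
  {V : ι → Type*} [∀ t, Fintype (V t)] [∀ t, DecidableEq (V t)]
  {W : ι → Type*} [∀ t, Fintype (W t)] [∀ t, DecidableEq (W t)]
  {v : (Σ t, V t) → ℝ} {μ : ℝ}

lemma adjMat_completeMultipartiteGraph_mulVec (v : (Σ t, V t) → ℝ) (x : Σ t, V t) :
    (adjMat (completeMultipartiteGraph V) *ᵥ v) x = ∑ y, v y - ∑ a, v ⟨x.1, a⟩ := by
  have hentry (y : Σ t, V t) : adjMat (completeMultipartiteGraph V) x y * v y =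
      v y - if x.1 = y.1 then v y else 0 := by
    by_cases hxy : x.1 = y.1 <;> simp [adjMat, adjMatrix_apply, hxy]
  have hpart : ∑ y : Σ t, V t, (if x.1 = y.1 then v y else 0) = ∑ a, v ⟨x.1, a⟩ := by
    rw [Fintype.sum_sigma, Fintype.sum_eq_single x.1 fun t ht ↦ by simp [ht.symm]]
    simp
  simp only [mulVec, dotProduct, hentry, sum_sub_distrib, hpart]

lemma sum_part_eq_of_mulVec_eq_smul (hμ : 0 < μ)
    (hv : adjMat (completeMultipartiteGraph V) *ᵥ v = μ • v) (t : ι) :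
    ∑ a, v ⟨t, a⟩ = (∑ y, v y) * (Fintype.card (V t) / (μ + Fintype.card (V t))) := by
  have hsum : ∑ _a : V t, (∑ y, v y - ∑ b, v ⟨t, b⟩) = ∑ a : V t, μ * v ⟨t, a⟩ :=
    sum_congr rfl fun a _ ↦
      (adjMat_completeMultipartiteGraph_mulVec v ⟨t, a⟩).symm.trans (congrFun hv ⟨t, a⟩)
  rw [sum_const, card_univ, nsmul_eq_mul, ← mul_sum] at hsum
  rw [← mul_div_assoc, eq_div_iff (by positivity)]
  linarith

lemma sum_ne_zero_of_mulVec_eq_smul (hμ : 0 < μ) (hv_ne : v ≠ 0)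
    (hv : adjMat (completeMultipartiteGraph V) *ᵥ v = μ • v) : ∑ y, v y ≠ 0 := by
  intro hzero
  refine hv_ne (funext fun x ↦ ?_)
  have hx := congrFun hv x
  rw [adjMat_completeMultipartiteGraph_mulVec, sum_part_eq_of_mulVec_eq_smul hμ hv, hzero,
    zero_mul, sub_zero, Pi.smul_apply, smul_eq_mul] at hx
  exact (mul_eq_zero.1 hx.symm).resolve_left hμ.ne'

lemma secular_eq_one_of_mem_spectrum (hμ : 0 < μ)
    (h : μ ∈ spectrum ℝ (adjMat (completeMultipartiteGraph V))) :
    secular (fun t ↦ (Fintype.card (V t) : ℝ)) μ = 1 := by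
  obtain ⟨v, hv_ne, hv⟩ := mem_spectrum_iff_exists_mulVec_eq_smul.1 h
  refine mul_left_cancel₀ (sum_ne_zero_of_mulVec_eq_smul hμ hv_ne hv) ?_
  calc (∑ y, v y) * secular (fun t ↦ (Fintype.card (V t) : ℝ)) μ
      = ∑ t, ∑ a, v ⟨t, a⟩ := by
        rw [secular, mul_sum]
        exact sum_congr rfl fun t _ ↦ (sum_part_eq_of_mulVec_eq_smul hμ hv t).symm
    _ = (∑ y, v y) * 1 := by rw [mul_one, Fintype.sum_sigma]

lemma mem_spectrum_of_secular_eq_one (hμ : 0 < μ)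
    (h : secular (fun t ↦ (Fintype.card (V t) : ℝ)) μ = 1) :
    μ ∈ spectrum ℝ (adjMat (completeMultipartiteGraph V)) := by
  let v : (Σ t, V t) → ℝ := fun x ↦ (μ + Fintype.card (V x.1))⁻¹
  have hpart (t : ι) : ∑ a, v ⟨t, a⟩ = Fintype.card (V t) / (μ + Fintype.card (V t)) := by
    calc ∑ a, v ⟨t, a⟩ = ∑ _a : V t, (μ + Fintype.card (V t) : ℝ)⁻¹ := rfl
      _ = Fintype.card (V t) / (μ + Fintype.card (V t)) := by
        rw [sum_const, card_univ, nsmul_eq_mul, div_eq_mul_inv]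
  have htotal : ∑ y, v y = 1 := by
    rw [Fintype.sum_sigma, ← h]
    exact sum_congr rfl fun t _ ↦ hpart t
  refine mem_spectrum_iff_exists_mulVec_eq_smul.2 ⟨v, ?_, funext fun x ↦ ?_⟩
  · intro hzero
    simp [hzero] at htotal
  · rw [adjMat_completeMultipartiteGraph_mulVec, htotal, hpart, Pi.smul_apply, smul_eq_mul]
    simp only [v]
    field_simp
    ring

lemma lt_specRad_of_one_lt_secular (hμ : 0 ≤ μ)
    (h : 1 < secular (fun t ↦ (Fintype.card (V t) : ℝ)) μ) :
    μ < specRad (completeMultipartiteGraph V) := by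
  obtain ⟨ν, hμν, hν⟩ := exists_gt_secular_eq_one (fun _ ↦ Nat.cast_nonneg _) hμ h
  exact hμν.trans_le (le_specRad (mem_spectrum_of_secular_eq_one (hμ.trans_lt hμν) hν))

theorem specRad_balance_lt_general {i j : ι}
    (hsum : Fintype.card (W i) + Fintype.card (W j) = Fintype.card (V i) + Fintype.card (V j))
    (hi : Fintype.card (W i) < Fintype.card (V i)) (hj : Fintype.card (W j) < Fintype.card (V i))
    (hrest : ∀ t, t ≠ i → t ≠ j → Fintype.card (W t) = Fintype.card (V t)) :
    specRad (completeMultipartiteGraph V) < specRad (completeMultipartiteGraph W) := by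
  rcases le_or_gt (specRad (completeMultipartiteGraph V)) 0 with hnonpos | hpos
  · have hij : i ≠ j := by
      rintro rfl
      lia
    have hW : 1 < secular (fun t ↦ (Fintype.card (W t) : ℝ)) 0 :=
      one_lt_secular_zero (fun _ ↦ Nat.cast_nonneg _) hij (Nat.cast_pos.2 (by lia))
        (Nat.cast_pos.2 (by lia))
    exact hnonpos.trans_lt (lt_specRad_of_one_lt_secular le_rfl hW)
  · refine lt_specRad_of_one_lt_secular hpos.le ?_
    rw [← secular_eq_one_of_mem_spectrum hpos (specRad_mem_spectrum_of_pos hpos)]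
    exact secular_lt_secular_of_balance hpos (Nat.cast_nonneg _) (mod_cast hsum)
      (Nat.cast_lt.2 hi) (Nat.cast_lt.2 hj) fun t hti htj ↦ congrArg _ (hrest t hti htj)

end CompleteMultipartite

/-- Balancing a complete multipartite graph strictly increases the spectral radius:
if `n i ≥ n j + 2`, moving one vertex from part `i` to part `j` increases `λ`. -/
theorem specRad_balance_lt (k : ℕ) (n : Fin k → ℕ) (hn : ∀ i, 1 ≤ n i)
    (i j : Fin k) (hij : i ≠ j) (h2 : n j + 2 ≤ n i) :
    specRad (SimpleGraph.completeMultipartiteGraph (fun t => Fin (n t))) <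
      specRad (SimpleGraph.completeMultipartiteGraph
        (fun t => Fin ((Function.update (Function.update n i (n i - 1)) j (n j + 1)) t))) := by
  apply specRad_balance_lt_general (i := i) (j := j) <;>
    grind [Function.update_apply, Fintype.card_fin]
end

section
/- For every n-vertex K_{k+1}-free graph G, the spectral radius satisfies λ(G) ≤ λ(T_k(n)), with equality if and only if G is isomorphic to the Turán graph T_k(n). -/
open Finset

/-!
The proof is Zykov symmetrization weighted by a Perron vector. Let `G` maximise the spectral radius
`ρ` among the `K_{k+1}`-free graphs on a vertex set and let `x ≥ 0` satisfy `A x = ρ x`. If `H` is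
`K_{k+1}`-free and differs from `G` only in edges at a vertex `t`, then
`xᵀ A_H x - xᵀ A_G x = 2 xₜ ((A_H x)ₜ - ρ xₜ)`. By the Rayleigh principle this is nonpositive, and
when it vanishes `x` is also an eigenvector of `H` for `ρ`.

Turning `t` into a copy of a vertex `s` keeps the graph `K_{k+1}`-free. Applied to various pairs,
this shows that `x` is positive, that it agrees on non-adjacent vertices, that non-adjacency is
transitive, and that `ρ xₛ ≤ (ρ + 1) xₜ` for adjacent `s`, `t`. Since `(ρ + |P|) x` takes the same
value `∑ x` on every part `P`, the last inequality forces the part sizes to differ by at most one.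
Finally, with fewer than `k` parts one could add an edge inside a part.
-/

open Matrix SimpleGraph

namespace SpectralTuran

section Matrix

variable {V : Type*} [Fintype V]

lemma mulVec_sub_mulVec_eq_of_forall_ne {R : Type*} [NonUnitalNonAssocRing R] {A B : Matrix V V R}
    {i i' t : V} (h : ∀ j ≠ t, A i j = B i' j) (x : V → R) :
    (A *ᵥ x) i - (B *ᵥ x) i' = (A i t - B i' t) * x t := by
  simp only [mulVec, dotProduct, ← sum_sub_distrib, ← sub_mul]
  exact sum_eq_single_of_mem t (mem_univ t) fun j _ hj ↦ by rw [h j hj, sub_self, zero_mul]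

lemma dotProduct_mulVec_eq_two_mul_of_forall_ne {R : Type*} [CommRing R] {D : Matrix V V R} {t : V}
    (hD : D.IsSymm) (htt : D t t = 0) (h : ∀ i ≠ t, ∀ j ≠ t, D i j = 0) (x : V → R) :
    x ⬝ᵥ D *ᵥ x = 2 * (x t * (D *ᵥ x) t) := by
  classical
  have row_of_ne : ∀ i ≠ t, (D *ᵥ x) i = D i t * x t := fun i hi ↦ by
    simpa using mulVec_sub_mulVec_eq_of_forall_ne (B := 0) (i' := t) (h i hi) x
  have row_self : (D *ᵥ x) t = ∑ i ∈ univ.erase t, D t i * x i := by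
    rw [mulVec, dotProduct, ← add_sum_erase _ _ (mem_univ t), htt, zero_mul, zero_add]
  calc x ⬝ᵥ D *ᵥ x
      = x t * (D *ᵥ x) t + ∑ i ∈ univ.erase t, x i * (D *ᵥ x) i :=
        (add_sum_erase _ _ (mem_univ t)).symm
    _ = x t * (D *ᵥ x) t + x t * ∑ i ∈ univ.erase t, D t i * x i := by
        rw [mul_sum]
        congr 1
        refine sum_congr rfl fun i hi ↦ ?_
        rw [row_of_ne i (ne_of_mem_erase hi), hD.apply]
        ring
    _ = 2 * (x t * (D *ᵥ x) t) := by rw [← row_self, two_mul]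

variable [DecidableEq V] {A : Matrix V V ℝ} {c : ℝ}

lemma posSemidef_algebraMap_sub (hA : A.IsHermitian) (hc : c ∈ upperBounds (spectrum ℝ A)) :
    (algebraMap ℝ (Matrix V V ℝ) c - A).PosSemidef := by
  rw [posSemidef_iff_isHermitian_and_spectrum_nonneg, ← spectrum.singleton_sub_eq]
  refine ⟨.sub ?_ hA, ?_⟩
  · rw [algebraMap_eq_diagonal]
    exact isHermitian_diagonal _
  · rintro _ ⟨_, rfl, μ, hμ, rfl⟩
    exact sub_nonneg.2 (hc hμ)

lemma algebraMap_sub_mulVec (x : V → ℝ) :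
    (algebraMap ℝ (Matrix V V ℝ) c - A) *ᵥ x = c • x - A *ᵥ x := by
  rw [sub_mulVec, Algebra.algebraMap_eq_smul_one, smul_mulVec, one_mulVec]

lemma dotProduct_mulVec_le (hA : A.IsHermitian) (hc : c ∈ upperBounds (spectrum ℝ A))
    (x : V → ℝ) : x ⬝ᵥ A *ᵥ x ≤ c * (x ⬝ᵥ x) := by
  have h := (posSemidef_algebraMap_sub hA hc).dotProduct_mulVec_nonneg x
  rwa [star_trivial, algebraMap_sub_mulVec, dotProduct_sub, dotProduct_smul, smul_eq_mul,
    sub_nonneg] at h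

lemma mulVec_eq_smul_of_le_dotProduct_mulVec (hA : A.IsHermitian)
    (hc : c ∈ upperBounds (spectrum ℝ A)) {x : V → ℝ} (hx : c * (x ⬝ᵥ x) ≤ x ⬝ᵥ A *ᵥ x) :
    A *ᵥ x = c • x := by
  have h := (posSemidef_algebraMap_sub hA hc).dotProduct_mulVec_zero_iff x
  rw [star_trivial, algebraMap_sub_mulVec, dotProduct_sub, dotProduct_smul, smul_eq_mul,
    sub_eq_zero, sub_eq_zero] at h
  exact (h.1 (hx.antisymm (dotProduct_mulVec_le hA hc x))).symm

lemma sSup_spectrum_mem_upperBounds (A : Matrix V V ℝ) :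
    sSup (spectrum ℝ A) ∈ upperBounds (spectrum ℝ A) :=
  fun _ ↦ le_csSup A.finite_real_spectrum.bddAbove

lemma exists_mulVec_eq_sSup_spectrum_smul [Nonempty V] (hA : A.IsHermitian) :
    ∃ x ≠ 0, A *ᵥ x = sSup (spectrum ℝ A) • x := by
  have hne : (spectrum ℝ A).Nonempty :=
    hA.spectrum_real_eq_range_eigenvalues ▸ Set.range_nonempty _
  have hmem := hne.csSup_mem A.finite_real_spectrum
  rw [← spectrum_toLin', ← Module.End.hasEigenvalue_iff_mem_spectrum] at hmem
  obtain ⟨x, hx⟩ := hmem.exists_hasEigenvector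
  exact ⟨x, hx.2, by simpa using hx.apply_eq_smul⟩

lemma exists_nonneg_mulVec_eq_sSup_spectrum_smul [Nonempty V] (hA : A.IsHermitian)
    (hnonneg : ∀ i j, 0 ≤ A i j) :
    ∃ x, 0 ≤ x ∧ x ≠ 0 ∧ A *ᵥ x = sSup (spectrum ℝ A) • x := by
  obtain ⟨y, hy0, hy⟩ := exists_mulVec_eq_sSup_spectrum_smul hA
  refine ⟨|y|, abs_nonneg y, ?_, mulVec_eq_smul_of_le_dotProduct_mulVec hA
    (sSup_spectrum_mem_upperBounds A) ?_⟩
  · exact fun h ↦ hy0 (funext fun i ↦ abs_eq_zero.1 (congrFun h i))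
  calc sSup (spectrum ℝ A) * (|y| ⬝ᵥ |y|)
      = y ⬝ᵥ A *ᵥ y := by
        rw [hy, dotProduct_smul, smul_eq_mul]
        simp only [dotProduct, Pi.abs_apply, abs_mul_abs_self]
    _ ≤ |y| ⬝ᵥ A *ᵥ |y| := by
        simp only [dotProduct, mulVec, mul_sum, Pi.abs_apply]
        refine sum_le_sum fun i _ ↦ sum_le_sum fun j _ ↦ ?_
        calc y i * (A i j * y j) ≤ |y i * (A i j * y j)| := le_abs_self _
          _ = |y i| * (A i j * |y j|) := by rw [abs_mul, abs_mul, abs_of_nonneg (hnonneg i j)]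

end Matrix

section AdjMat

variable {V : Type*} [Fintype V] [DecidableEq V] {G H : SimpleGraph V} {t u v : V}

lemma adjMat_eq_adjMatrix (G : SimpleGraph V) [DecidableRel G.Adj] :
    adjMat G = G.adjMatrix ℝ := by
  unfold adjMat
  congr!

lemma adjMat_of_adj (h : G.Adj u v) : adjMat G u v = 1 := by
  classical simp [adjMat_eq_adjMatrix, h]

lemma adjMat_of_not_adj (h : ¬G.Adj u v) : adjMat G u v = 0 := by
  classical simp [adjMat_eq_adjMatrix, h]

lemma adjMat_congr {u' v' : V} (h : G.Adj u v ↔ H.Adj u' v') :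
    adjMat G u v = adjMat H u' v' := by
  classical simp [adjMat_eq_adjMatrix, h]

lemma adjMat_nonneg (G : SimpleGraph V) (u v : V) : 0 ≤ adjMat G u v := by
  by_cases h : G.Adj u v
  · simp [adjMat_of_adj h]
  · simp [adjMat_of_not_adj h]

lemma adjMat_bot : adjMat (⊥ : SimpleGraph V) = 0 := by
  ext u v
  exact adjMat_of_not_adj id

lemma isSymm_adjMat (G : SimpleGraph V) : (adjMat G).IsSymm := by
  classical exact adjMat_eq_adjMatrix G ▸ isSymm_adjMatrix G

lemma isHermitian_adjMat (G : SimpleGraph V) : (adjMat G).IsHermitian :=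
  isHermitian_iff_isSymm.2 (isSymm_adjMat G)

lemma adjMat_mulVec_apply (G : SimpleGraph V) [DecidableRel G.Adj] (x : V → ℝ) (v : V) :
    (adjMat G *ᵥ x) v = ∑ w ∈ G.neighborFinset v, x w := by
  rw [adjMat_eq_adjMatrix, adjMatrix_mulVec_apply]

lemma adjMat_replaceVertex_mulVec_self (G : SimpleGraph V) (s t : V) (x : V → ℝ) :
    (adjMat (G.replaceVertex s t) *ᵥ x) t = (adjMat G *ᵥ x) s - adjMat G s t * x t := by
  have h := mulVec_sub_mulVec_eq_of_forall_ne (A := adjMat (G.replaceVertex s t)) (B := adjMat G)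
    (fun j hj ↦ adjMat_congr (G.adj_replaceVertex_iff_of_ne_right s hj)) x
  rw [adjMat_of_not_adj (SimpleGraph.irrefl _)] at h
  linarith

lemma adjMat_replaceVertex_mulVec_of_ne (G : SimpleGraph V) (s : V) (hu : u ≠ t) (x : V → ℝ) :
    (adjMat (G.replaceVertex s t) *ᵥ x) u =
      (adjMat G *ᵥ x) u + (adjMat G u s - adjMat G u t) * x t := by
  have h := mulVec_sub_mulVec_eq_of_forall_ne (A := adjMat (G.replaceVertex s t)) (B := adjMat G)
    (fun j hj ↦ adjMat_congr (G.adj_replaceVertex_iff_of_ne s hu hj)) x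
  have column_t : adjMat (G.replaceVertex s t) u t = adjMat G u s := by
    refine adjMat_congr ?_
    rw [SimpleGraph.adj_comm, G.adj_replaceVertex_iff_of_ne_right s hu, SimpleGraph.adj_comm]
  rw [column_t] at h
  linarith

lemma adjMat_sup_edge_mulVec_left (hne : u ≠ v) (huv : ¬G.Adj u v) (x : V → ℝ) :
    (adjMat (G ⊔ edge u v) *ᵥ x) u = (adjMat G *ᵥ x) u + x v := by
  have h := mulVec_sub_mulVec_eq_of_forall_ne (A := adjMat (G ⊔ edge u v)) (B := adjMat G)
    (i := u) (i' := u) (t := v)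
    (fun j hj ↦ adjMat_congr (by simp [edge_adj, hj, hne])) x
  rw [adjMat_of_adj (by simp [edge_adj, hne]), adjMat_of_not_adj huv] at h
  linarith

end AdjMat

section SpecRad

variable {V : Type*} [Fintype V] [DecidableEq V] {G H : SimpleGraph V} {t u v : V} {x : V → ℝ}

lemma specRad_congr {W : Type*} [Fintype W] [DecidableEq W] {H : SimpleGraph W} (e : G ≃g H) :
    specRad G = specRad H := by
  classical
  have hreindex : reindexAlgEquiv ℝ ℝ e.toEquiv (adjMat G) = adjMat H := by
    rw [adjMat_eq_adjMatrix, adjMat_eq_adjMatrix]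
    exact e.reindex_adjMatrix ℝ
  rw [specRad, specRad, ← hreindex, AlgEquiv.spectrum_eq]

lemma specRad_bot : specRad (⊥ : SimpleGraph V) = 0 := by
  rw [specRad, adjMat_bot]
  cases isEmpty_or_nonempty V
  · rw [spectrum.of_subsingleton, Real.sSup_empty]
  · rw [spectrum.zero_eq, csSup_singleton]

lemma specRad_pos_of_adj (h : G.Adj u v) : 0 < specRad G := by
  have le_rayleigh : adjMat G u v ≤ (1 : V → ℝ) ⬝ᵥ adjMat G *ᵥ 1 := by
    simp only [dotProduct, mulVec, Pi.one_apply, mul_one, one_mul]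
    exact (single_le_sum (fun j _ ↦ adjMat_nonneg G u j) (mem_univ v)).trans
      (single_le_sum (f := fun i ↦ ∑ j, adjMat G i j)
        (fun i _ ↦ sum_nonneg fun j _ ↦ adjMat_nonneg G i j) (mem_univ u))
  have rayleigh_le := dotProduct_mulVec_le (isHermitian_adjMat G)
    (sSup_spectrum_mem_upperBounds (adjMat G)) 1
  rw [adjMat_of_adj h] at le_rayleigh
  exact pos_of_mul_pos_left (zero_lt_one.trans_le (le_rayleigh.trans rayleigh_le))
    (sum_nonneg fun i _ ↦ mul_self_nonneg _)

lemma dotProduct_adjMat_mulVec_of_forall_ne {ρ : ℝ} (hx : adjMat G *ᵥ x = ρ • x)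
    (hGH : ∀ u ≠ t, ∀ v ≠ t, (H.Adj u v ↔ G.Adj u v)) :
    x ⬝ᵥ adjMat H *ᵥ x = ρ * (x ⬝ᵥ x) + 2 * (x t * ((adjMat H *ᵥ x) t - ρ * x t)) := by
  have h := dotProduct_mulVec_eq_two_mul_of_forall_ne (D := adjMat H - adjMat G) (t := t)
    ((isSymm_adjMat H).sub (isSymm_adjMat G)) (by simp [adjMat_of_not_adj])
    (fun u hu v hv ↦ sub_eq_zero.2 (adjMat_congr (hGH u hu v hv))) x
  rw [sub_mulVec, dotProduct_sub, hx, dotProduct_smul, Pi.sub_apply, Pi.smul_apply, smul_eq_mul,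
    smul_eq_mul] at h
  linarith

/-- A positive eigenvector of the adjacency matrix for the spectral radius. It assigns to the
vertices the weights with which edges are counted in the symmetrization argument. -/
structure IsPerronVector (G : SimpleGraph V) (x : V → ℝ) : Prop where
  pos : ∀ v, 0 < x v
  mulVec_eq : adjMat G *ᵥ x = specRad G • x

lemma IsPerronVector.mulVec_apply (hx : IsPerronVector G x) (v : V) :
    (adjMat G *ᵥ x) v = specRad G * x v :=
  congrFun hx.mulVec_eq v

end SpecRad

section CompleteMultipartite

variable {V : Type*} [Fintype V] [DecidableEq V] {G : SimpleGraph V} {u v : V} {k : ℕ}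

/-- The partition of the vertices of a complete multipartite graph into its parts, which are the
classes of the non-adjacency relation. -/
noncomputable def multipartition (h : G.IsCompleteMultipartite) : Finpartition (univ : Finset V) :=
  letI : DecidableRel h.setoid.r := Classical.decRel _
  Finpartition.ofSetoid h.setoid

lemma mem_part_multipartition_iff (h : G.IsCompleteMultipartite) :
    v ∈ (multipartition h).part u ↔ ¬G.Adj u v :=
  letI : DecidableRel h.setoid.r := Classical.decRel _
  Finpartition.mem_part_ofSetoid_iff_rel

lemma part_multipartition_eq_iff (h : G.IsCompleteMultipartite) :
    (multipartition h).part u = (multipartition h).part v ↔ ¬G.Adj u v := by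
  rw [← mem_part_multipartition_iff h, Finpartition.mem_part_iff_part_eq_part _ (mem_univ v)
    (mem_univ u), eq_comm]

lemma cliqueFree_iff_card_parts_multipartition_lt (h : G.IsCompleteMultipartite) :
    G.CliqueFree k ↔ #(multipartition h).parts < k := by
  constructor
  · intro hk
    obtain ⟨z, -, hz⟩ := (multipartition h).exists_subset_part_bijOn
    have clique_z : G.IsNClique #z z := by
      refine ⟨fun u hu v hv huv ↦ ?_, rfl⟩
      by_contra hadj
      exact huv (hz.injOn hu hv ((part_multipartition_eq_iff h).2 hadj))
    rw [← Finset.card_eq_of_equiv hz.equiv]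
    exact lt_of_not_ge fun hle ↦ clique_z.not_cliqueFree (hk.mono hle)
  · intro hk
    let coloring : G.Coloring (multipartition h).parts :=
      .mk (fun v ↦ ⟨(multipartition h).part v, (multipartition h).part_mem.2 (mem_univ v)⟩)
        fun hadj heq ↦ (part_multipartition_eq_iff h).1 (congrArg Subtype.val heq) hadj
    exact coloring.colorable.cliqueFree (by simpa using hk)

lemma adjMat_mulVec_add_sum_part (h : G.IsCompleteMultipartite) (x : V → ℝ) (v : V) :
    (adjMat G *ᵥ x) v + ∑ w ∈ (multipartition h).part v, x w = ∑ w, x w := by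
  classical
  have hpart : (multipartition h).part v = univ.filter (¬G.Adj v ·) := by
    ext w
    simp [mem_part_multipartition_iff]
  rw [adjMat_mulVec_apply, neighborFinset_eq_filter, hpart, sum_filter_add_sum_filter_not]

lemma sum_part_le_adjMat_mulVec (h : G.IsCompleteMultipartite) (hadj : G.Adj u v) {x : V → ℝ}
    (hx : 0 ≤ x) : ∑ w ∈ (multipartition h).part v, x w ≤ (adjMat G *ᵥ x) u := by
  classical
  rw [adjMat_mulVec_apply]
  refine sum_le_sum_of_subset_of_nonneg (fun w hw ↦ ?_) fun w _ _ ↦ hx w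
  rw [mem_part_multipartition_iff] at hw
  rw [mem_neighborFinset]
  by_contra huw
  exact h.trans u w v huw (fun hwv ↦ hw hwv.symm) hadj

lemma nonempty_iso_turanGraph_card_parts (h : G.IsCompleteMultipartite)
    (heq : (multipartition h).IsEquipartition) :
    Nonempty (G ≃g turanGraph (Fintype.card V) #(multipartition h).parts) := by
  obtain ⟨f, hf⟩ := heq.exists_partPreservingEquiv
  let e : V ≃ Fin (Fintype.card V) := (Equiv.subtypeUnivEquiv mem_univ).symm.trans f
  refine ⟨e, fun {u v} ↦ ?_⟩
  rw [turanGraph_adj, ← not_iff_not, not_ne_iff, ← part_multipartition_eq_iff h]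
  exact (hf ⟨u, mem_univ u⟩ ⟨v, mem_univ v⟩).symm

lemma turanGraph_min (n k : ℕ) : turanGraph n (min n k) = turanGraph n k := by
  rcases le_total k n with hkn | hnk
  · rw [min_eq_right hkn]
  · rw [min_eq_left hnk, turanGraph_eq_top.2 (.inr le_rfl), turanGraph_eq_top.2 (.inr hnk)]

end CompleteMultipartite

/-- `G` has the largest spectral radius among the `K_{k+1}`-free graphs on its vertex set: the
spectral analogue of `SimpleGraph.IsTuranMaximal`. -/
structure IsSpectralTuranMaximal {V : Type*} [Fintype V] [DecidableEq V] (G : SimpleGraph V)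
    (k : ℕ) : Prop where
  cliqueFree : G.CliqueFree (k + 1)
  specRad_le : ∀ H : SimpleGraph V, H.CliqueFree (k + 1) → specRad H ≤ specRad G

namespace IsSpectralTuranMaximal

variable {V : Type*} [Fintype V] [DecidableEq V] {G H : SimpleGraph V} {k : ℕ} {s t u v w : V}
  {x : V → ℝ}

lemma specRad_mem_upperBounds (hG : IsSpectralTuranMaximal G k) (hH : H.CliqueFree (k + 1)) :
    specRad G ∈ upperBounds (spectrum ℝ (adjMat H)) :=
  fun _ hμ ↦ (sSup_spectrum_mem_upperBounds (adjMat H) hμ).trans (hG.specRad_le H hH)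

lemma adjMat_mulVec_le (hG : IsSpectralTuranMaximal G k) (hx : IsPerronVector G x)
    (hH : H.CliqueFree (k + 1)) (hGH : ∀ u ≠ t, ∀ v ≠ t, (H.Adj u v ↔ G.Adj u v)) :
    (adjMat H *ᵥ x) t ≤ specRad G * x t := by
  have rayleigh := dotProduct_mulVec_le (isHermitian_adjMat H) (hG.specRad_mem_upperBounds hH) x
  rw [dotProduct_adjMat_mulVec_of_forall_ne hx.mulVec_eq hGH] at rayleigh
  have hmul : x t * ((adjMat H *ᵥ x) t - specRad G * x t) ≤ 0 := by linarith
  exact sub_nonpos.1 (nonpos_of_mul_nonpos_right hmul (hx.pos t))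

lemma adjMat_mulVec_eq (hG : IsSpectralTuranMaximal G k) (hx : adjMat G *ᵥ x = specRad G • x)
    (hH : H.CliqueFree (k + 1)) (hGH : ∀ u ≠ t, ∀ v ≠ t, (H.Adj u v ↔ G.Adj u v))
    (ht : x t = 0 ∨ (adjMat H *ᵥ x) t = specRad G * x t) :
    adjMat H *ᵥ x = specRad G • x := by
  have hmul : x t * ((adjMat H *ᵥ x) t - specRad G * x t) = 0 := by
    rwa [mul_eq_zero, sub_eq_zero]
  refine mulVec_eq_smul_of_le_dotProduct_mulVec (isHermitian_adjMat H)
    (hG.specRad_mem_upperBounds hH) ?_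
  rw [dotProduct_adjMat_mulVec_of_forall_ne hx hGH, hmul, mul_zero, add_zero]

lemma adjMat_replaceVertex_mulVec_le (hG : IsSpectralTuranMaximal G k) (hx : IsPerronVector G x)
    (s t : V) : (adjMat (G.replaceVertex s t) *ᵥ x) t ≤ specRad G * x t :=
  hG.adjMat_mulVec_le hx (hG.cliqueFree.replaceVertex s t)
    fun _ hu _ hv ↦ G.adj_replaceVertex_iff_of_ne s hu hv

lemma adjMat_replaceVertex_mulVec_eq (hG : IsSpectralTuranMaximal G k)
    (hx : adjMat G *ᵥ x = specRad G • x)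
    (ht : x t = 0 ∨ (adjMat (G.replaceVertex s t) *ᵥ x) t = specRad G * x t) :
    adjMat (G.replaceVertex s t) *ᵥ x = specRad G • x :=
  hG.adjMat_mulVec_eq hx (hG.cliqueFree.replaceVertex s t)
    (fun _ hu _ hv ↦ G.adj_replaceVertex_iff_of_ne s hu hv) ht

lemma pos_of_nonneg_of_mulVec_eq (hG : IsSpectralTuranMaximal G k) (hρ : 0 < specRad G)
    (hx0 : 0 ≤ x) (hxne : x ≠ 0) (hx : adjMat G *ᵥ x = specRad G • x) (t : V) : 0 < x t := by
  refine (hx0 t).lt_of_ne' fun ht ↦ ?_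
  obtain ⟨s, hs⟩ := Function.ne_iff.1 hxne
  have eigen_t := congrFun (hG.adjMat_replaceVertex_mulVec_eq (s := s) hx (.inl ht)) t
  rw [adjMat_replaceVertex_mulVec_self, hx] at eigen_t
  simp only [Pi.smul_apply, smul_eq_mul, ht, Pi.zero_apply, mul_zero, sub_zero] at eigen_t
  exact mul_ne_zero hρ.ne' hs eigen_t

lemma exists_isPerronVector (hG : IsSpectralTuranMaximal G k) : ∃ x, IsPerronVector G x := by
  obtain rfl | hne := eq_or_ne G ⊥
  · exact ⟨1, fun _ ↦ one_pos, by rw [adjMat_bot, specRad_bot, zero_mulVec, zero_smul]⟩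
  · obtain ⟨u, v, huv⟩ := ne_bot_iff_exists_adj.1 hne
    have : Nonempty V := ⟨u⟩
    obtain ⟨x, hx0, hxne, hx⟩ := exists_nonneg_mulVec_eq_sSup_spectrum_smul
      (isHermitian_adjMat G) (adjMat_nonneg G)
    exact ⟨x, hG.pos_of_nonneg_of_mulVec_eq (specRad_pos_of_adj huv) hx0 hxne hx, hx⟩

lemma perron_le_of_not_adj (hG : IsSpectralTuranMaximal G k) (hx : IsPerronVector G x)
    (hρ : 0 < specRad G) (hst : ¬G.Adj s t) : x s ≤ x t := by
  have h := hG.adjMat_replaceVertex_mulVec_le hx s t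
  rw [adjMat_replaceVertex_mulVec_self, hx.mulVec_apply, adjMat_of_not_adj hst, zero_mul,
    sub_zero] at h
  exact le_of_mul_le_mul_left h hρ

lemma perron_eq_of_not_adj (hG : IsSpectralTuranMaximal G k) (hx : IsPerronVector G x)
    (hρ : 0 < specRad G) (hst : ¬G.Adj s t) : x s = x t :=
  (hG.perron_le_of_not_adj hx hρ hst).antisymm
    (hG.perron_le_of_not_adj hx hρ fun hts ↦ hst hts.symm)

lemma isCompleteMultipartite (hG : IsSpectralTuranMaximal G k) : G.IsCompleteMultipartite := by
  refine ⟨fun t s u hts hsu htu ↦ ?_⟩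
  obtain ⟨x, hx⟩ := hG.exists_isPerronVector
  have hst : ¬G.Adj s t := fun h ↦ hts h.symm
  have row_t : (adjMat (G.replaceVertex s t) *ᵥ x) t = specRad G * x t := by
    rw [adjMat_replaceVertex_mulVec_self, hx.mulVec_apply, adjMat_of_not_adj hst, zero_mul,
      sub_zero, hG.perron_eq_of_not_adj hx (specRad_pos_of_adj htu) hst]
  -- `u` loses the neighbour `t` and gains nothing, although `x` is still an eigenvector.
  have row_u := congrFun (hG.adjMat_replaceVertex_mulVec_eq hx.mulVec_eq (.inr row_t)) u
  rw [adjMat_replaceVertex_mulVec_of_ne G s htu.ne', hx.mulVec_eq, adjMat_of_adj htu.symm,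
    adjMat_of_not_adj fun hus ↦ hsu hus.symm] at row_u
  linarith [hx.pos t]

lemma mul_perron_le_of_adj (hG : IsSpectralTuranMaximal G k) (hx : IsPerronVector G x)
    (hvw : G.Adj v w) : specRad G * x v ≤ (specRad G + 1) * x w := by
  have h := hG.adjMat_replaceVertex_mulVec_le hx v w
  rw [adjMat_replaceVertex_mulVec_self, hx.mulVec_apply, adjMat_of_adj hvw] at h
  linarith

lemma sum_part_perron (hG : IsSpectralTuranMaximal G k) (hx : IsPerronVector G x)
    (hρ : 0 < specRad G) (v : V) :
    ∑ w ∈ (multipartition hG.isCompleteMultipartite).part v, x w =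
      #((multipartition hG.isCompleteMultipartite).part v) * x v := by
  rw [← nsmul_eq_mul, ← sum_const]
  refine sum_congr rfl fun w hw ↦ (hG.perron_eq_of_not_adj hx hρ ?_).symm
  exact (mem_part_multipartition_iff _).1 hw

lemma specRad_add_card_part_mul_perron (hG : IsSpectralTuranMaximal G k)
    (hx : IsPerronVector G x) (hρ : 0 < specRad G) (v : V) :
    (specRad G + #((multipartition hG.isCompleteMultipartite).part v)) * x v = ∑ w, x w := by
  rw [add_mul, ← hG.sum_part_perron hx hρ, ← hx.mulVec_apply, adjMat_mulVec_add_sum_part]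

lemma card_part_le_specRad_add_one (hG : IsSpectralTuranMaximal G k) (hx : IsPerronVector G x)
    (hvw : G.Adj v w) :
    (#((multipartition hG.isCompleteMultipartite).part w) : ℝ) ≤ specRad G + 1 := by
  refine le_of_mul_le_mul_right ?_ (hx.pos w)
  calc #((multipartition hG.isCompleteMultipartite).part w) * x w
      = ∑ u ∈ (multipartition hG.isCompleteMultipartite).part w, x u :=
        (hG.sum_part_perron hx (specRad_pos_of_adj hvw) w).symm
    _ ≤ (adjMat G *ᵥ x) v := sum_part_le_adjMat_mulVec _ hvw fun u ↦ (hx.pos u).le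
    _ = specRad G * x v := hx.mulVec_apply v
    _ ≤ (specRad G + 1) * x w := hG.mul_perron_le_of_adj hx hvw

lemma card_part_le_card_part_add_one (hG : IsSpectralTuranMaximal G k) (hvw : G.Adj v w) :
    #((multipartition hG.isCompleteMultipartite).part w) ≤
      #((multipartition hG.isCompleteMultipartite).part v) + 1 := by
  obtain ⟨x, hx⟩ := hG.exists_isPerronVector
  have hρ := specRad_pos_of_adj hvw
  have weight_eq := (hG.specRad_add_card_part_mul_perron hx hρ v).trans
    (hG.specRad_add_card_part_mul_perron hx hρ w).symm
  have large_le := hG.card_part_le_specRad_add_one hx hvw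
  have clone_le := hG.mul_perron_le_of_adj hx hvw
  by_contra! hlt
  replace hlt := Nat.succ_le_of_lt hlt
  rify at hlt
  set ρ := specRad G
  set a := (#((multipartition hG.isCompleteMultipartite).part w) : ℝ)
  set b := (#((multipartition hG.isCompleteMultipartite).part v) : ℝ)
  have hb : 0 ≤ b := Nat.cast_nonneg _
  have product_le : ρ * (ρ + a) ≤ (ρ + b) * (ρ + 1) := by
    refine le_of_mul_le_mul_right ?_ (hx.pos w)
    calc ρ * (ρ + a) * x w = (ρ + b) * (ρ * x v) := by linear_combination -ρ * weight_eq
      _ ≤ (ρ + b) * ((ρ + 1) * x w) := by gcongr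
      _ = (ρ + b) * (ρ + 1) * x w := by ring
  have specRad_le_mul_gap : ρ * 1 ≤ ρ * (a - b - 1) := by gcongr; linarith
  linarith

lemma isEquipartition (hG : IsSpectralTuranMaximal G k) :
    (multipartition hG.isCompleteMultipartite).IsEquipartition := by
  by_contra h
  obtain ⟨large, hlarge, small, hsmall, hlt⟩ := Finpartition.not_isEquipartition.1 h
  obtain ⟨w, hw⟩ := Finpartition.nonempty_of_mem_parts _ hlarge
  obtain ⟨v, hv⟩ := Finpartition.nonempty_of_mem_parts _ hsmall
  obtain rfl := Finpartition.part_eq_of_mem _ hlarge hw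
  obtain rfl := Finpartition.part_eq_of_mem _ hsmall hv
  have hvw : G.Adj v w := by
    by_contra hadj
    rw [(part_multipartition_eq_iff _).2 hadj] at hlt
    lia
  exact hlt.not_ge (hG.card_part_le_card_part_add_one hvw)

lemma not_cliqueFree_of_not_adj (hG : IsSpectralTuranMaximal G k) (hne : u ≠ v)
    (huv : ¬G.Adj u v) : ¬G.CliqueFree k := by
  intro hk
  obtain ⟨x, hx⟩ := hG.exists_isPerronVector
  have h := hG.adjMat_mulVec_le (t := u) hx (hk.sup_edge u v)
    fun a ha b hb ↦ by simp [edge_adj, ha, hb]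
  rw [adjMat_sup_edge_mulVec_left hne huv, hx.mulVec_apply] at h
  linarith [hx.pos v]

lemma card_parts (hG : IsSpectralTuranMaximal G k) :
    #(multipartition hG.isCompleteMultipartite).parts = min (Fintype.card V) k := by
  have card_le : #(multipartition hG.isCompleteMultipartite).parts ≤ k :=
    Nat.lt_succ_iff.1 ((cliqueFree_iff_card_parts_multipartition_lt _).1 hG.cliqueFree)
  refine (le_min (Finpartition.card_parts_le_card _) card_le).antisymm ?_
  by_contra! hlt
  obtain ⟨hltV, hltk⟩ := lt_min_iff.1 hlt
  obtain ⟨u, -, v, -, hne, heq⟩ := exists_ne_map_eq_of_card_lt_of_maps_to hltV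
    fun v _ ↦ (Finpartition.part_mem _).2 (mem_univ v)
  exact hG.not_cliqueFree_of_not_adj hne ((part_multipartition_eq_iff _).1 heq)
    ((cliqueFree_iff_card_parts_multipartition_lt _).2 hltk)

theorem nonempty_iso_turanGraph (hG : IsSpectralTuranMaximal G k) :
    Nonempty (G ≃g turanGraph (Fintype.card V) k) := by
  have h := nonempty_iso_turanGraph_card_parts _ hG.isEquipartition
  rwa [hG.card_parts, turanGraph_min] at h

end IsSpectralTuranMaximal

lemma exists_isSpectralTuranMaximal {V : Type*} [Fintype V] [DecidableEq V] {G : SimpleGraph V}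
    {k : ℕ} (hG : G.CliqueFree (k + 1)) : ∃ M : SimpleGraph V, IsSpectralTuranMaximal M k := by
  obtain ⟨M, hM, hmax⟩ := Set.exists_max_image {H : SimpleGraph V | H.CliqueFree (k + 1)} specRad
    (Set.toFinite _) ⟨G, hG⟩
  exact ⟨M, hM, hmax⟩

end SpectralTuran

open SpectralTuran in
theorem nikiforov_spectral_turan_general {V : Type*} [Fintype V] [DecidableEq V] {k : ℕ}
    (G : SimpleGraph V) (hG : G.CliqueFree (k + 1)) :
    specRad G ≤ specRad (turanGraph (Fintype.card V) k) ∧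
      (specRad G = specRad (turanGraph (Fintype.card V) k) ↔
        Nonempty (G ≃g turanGraph (Fintype.card V) k)) := by
  obtain ⟨M, hM⟩ := exists_isSpectralTuranMaximal hG
  obtain ⟨e⟩ := hM.nonempty_iso_turanGraph
  rw [← specRad_congr e]
  refine ⟨hM.specRad_le G hG, fun heq ↦ ?_, fun ⟨f⟩ ↦ ?_⟩
  · have hGmax : IsSpectralTuranMaximal G k := ⟨hG, fun H hH ↦ heq ▸ hM.specRad_le H hH⟩
    exact hGmax.nonempty_iso_turanGraph
  · rw [specRad_congr f, specRad_congr e]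

/-- Nikiforov's spectral Turán theorem: every `n`-vertex `K_{k+1}`-free graph `G` satisfies
`λ(G) ≤ λ(T_k(n))`, with equality iff `G` is isomorphic to the Turán graph `T_k(n)`. -/
theorem nikiforov_spectral_turan {n k : ℕ} (hk : 1 ≤ k) (G : SimpleGraph (Fin n))
    (hG : G.CliqueFree (k + 1)) :
    specRad G ≤ specRad (SimpleGraph.turanGraph n k) ∧
      (specRad G = specRad (SimpleGraph.turanGraph n k) ↔
        Nonempty (G ≃g SimpleGraph.turanGraph n k)) := by
  have h := nikiforov_spectral_turan_general G hG
  rwa [Fintype.card_fin] at h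
end
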